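/- The class of flankable NFA is not closed under non-injective relabeling: there exist finite alphabets Σ and Γ, a map h : Σ → Γ, and an NFA M over Σ with all states final such that M is flankable, but the relabeled NFA h(M) over Γ — with the same states and initial states as M and transitions q →b q' in h(M) iff q →a q' in M for some a with h(a) = b — is not flankable. -/

import Mathlib

/-- A nondeterministic finite automaton (all states final). -/
structure NFA' (Q A : Type) where
  E : Q → A → Q → Prop
  I : Set Q

namespace NFA'

variable {Q A : Type}

/-- One step of the automaton on a set of states. -/
def step (M : NFA' Q A) (S : Set Q) (a : A) : Set Q := {q' | ∃ q ∈ S, M.E q a q'}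

/-- `M.reach u` is the set of states reached after reading the word `u`
(`M(ε) = I`, `M(u·a) = {q' | ∃ q ∈ M(u), (q,a,q') ∈ E}`). -/
def reach (M : NFA' Q A) (u : List A) : Set Q := u.foldl M.step M.I

/-- The (prefix-closed) language of `M`: words `u` with `M(u) ≠ ∅`. -/
def lang (M : NFA' Q A) : Set (List A) := {u | (M.reach u).Nonempty}

/-- `F` flanks `M`: for all words `u` and symbols `a`,
`u ∈ L(M) ∧ u·a ∉ L(M)` iff some state of `M(u)` forbids `a`. -/
def Flanks (M : NFA' Q A) (F : Q → A → Prop) : Prop :=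
  ∀ (u : List A) (a : A),
    (u ∈ M.lang ∧ u ++ [a] ∉ M.lang) ↔ ∃ q ∈ M.reach u, F q a

end NFA'

/-!
In a flanked automaton, a symbol forbidden at a state blocks every word reaching that state. So if
`a` blocks `v ∈ L(M)` and `M(v) ⊆ M(u)`, then `a` blocks `u` too. Deterministic automata are
flankable, because the single state reached by a word decides which symbols are blocked.

Let `a ≠ b` have the same image `c` under the relabeling, and take the deterministic automaton with
initial state `0` and transitions `0 →a 1`, `0 →b 2` and `2 →b 1`. After relabeling, `c` leads to
`{1, 2}` and `c·c` to `{1}`, where `c` is blocked; yet `c` is not blocked in `{1, 2} ⊇ {1}`.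
-/

namespace NFA'

variable {Q A B : Type}

theorem reach_append_singleton (M : NFA' Q A) (u : List A) (a : A) :
    M.reach (u ++ [a]) = M.step (M.reach u) a :=
  List.foldl_concat ..

theorem append_singleton_mem_lang {M : NFA' Q A} {u : List A} {a : A} :
    u ++ [a] ∈ M.lang ↔ ∃ q ∈ M.reach u, ∃ q', M.E q a q' := by
  change (M.reach (u ++ [a])).Nonempty ↔ _
  rw [reach_append_singleton]
  exact ⟨fun ⟨q', q, hq, hqq'⟩ => ⟨q, hq, q', hqq'⟩, fun ⟨q, hq, q', hqq'⟩ => ⟨q', q, hq, hqq'⟩⟩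

/-- `M` is flankable if some relation on states and symbols flanks it. -/
def Flankable (M : NFA' Q A) : Prop := ∃ F : Q → A → Prop, M.Flanks F

/-- The relabeled automaton `h(M)`: same states and initial states, each symbol `a` on a
transition replaced by `h a`. -/
def relabel (h : A → B) (M : NFA' Q A) : NFA' Q B :=
  ⟨fun q b q' => ∃ a, h a = b ∧ M.E q a q', M.I⟩

/-- Determinism of a possibly incomplete automaton: at most one initial state, and at most one
successor for each state and symbol. -/
structure IsDeterministic (M : NFA' Q A) : Prop where
  subsingleton_initial : M.I.Subsingleton
  subsingleton_successors : ∀ q a, {q' | M.E q a q'}.Subsingleton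

theorem IsDeterministic.subsingleton_reach {M : NFA' Q A} (hM : M.IsDeterministic) (u : List A) :
    (M.reach u).Subsingleton := by
  induction u using List.reverseRecOn with
  | nil => exact hM.subsingleton_initial
  | append_singleton u a ih =>
    rw [reach_append_singleton]
    rintro q₁' ⟨q₁, hq₁, h₁⟩ q₂' ⟨q₂, hq₂, h₂⟩
    obtain rfl : q₁ = q₂ := ih hq₁ hq₂
    exact hM.subsingleton_successors q₁ a h₁ h₂

theorem IsDeterministic.flanks {M : NFA' Q A} (hM : M.IsDeterministic) :
    M.Flanks fun q a => ∀ q', ¬ M.E q a q' := by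
  intro u a
  rw [append_singleton_mem_lang]
  constructor
  · rintro ⟨⟨q, hq⟩, hblocked⟩
    exact ⟨q, hq, fun q' hqq' => hblocked ⟨q, hq, q', hqq'⟩⟩
  · rintro ⟨q, hq, hstuck⟩
    refine ⟨⟨q, hq⟩, ?_⟩
    rintro ⟨p, hp, q', hpq'⟩
    obtain rfl : p = q := hM.subsingleton_reach u hp hq
    exact hstuck q' hpq'

theorem Flankable.append_singleton_notMem_lang {M : NFA' Q A} (hM : M.Flankable) {u v : List A}
    {a : A} (hvu : M.reach v ⊆ M.reach u) (hv : v ∈ M.lang) (hva : v ++ [a] ∉ M.lang) :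
    u ++ [a] ∉ M.lang := by
  obtain ⟨F, hF⟩ := hM
  obtain ⟨q, hq, hqa⟩ := (hF v a).1 ⟨hv, hva⟩
  exact ((hF u a).2 ⟨q, hvu hq, hqa⟩).2

/-- The counterexample automaton: `a` leads from `0` directly to the dead end `1`, and `b·b` does
so through the intermediate state `2`. -/
def shortcut (a b : A) : NFA' (Fin 3) A where
  E q c q' := (q = 0 ∧ c = a ∧ q' = 1) ∨ (q = 0 ∧ c = b ∧ q' = 2) ∨ (q = 2 ∧ c = b ∧ q' = 1)
  I := {0}

theorem isDeterministic_shortcut {a b : A} (hab : a ≠ b) : (shortcut a b).IsDeterministic where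
  subsingleton_initial := Set.subsingleton_singleton
  subsingleton_successors q c := by
    rintro q₁ h₁ q₂ h₂
    simp only [shortcut, Set.mem_ofPred_eq] at h₁ h₂
    grind

section RelabelShortcut

variable {h : A → B} {a b : A} (hab : h a = h b)
include hab

theorem relabel_shortcut_E {q q' : Fin 3} :
    ((shortcut a b).relabel h).E q (h a) q' ↔
      (q = 0 ∧ (q' = 1 ∨ q' = 2)) ∨ (q = 2 ∧ q' = 1) := by
  simp only [relabel, shortcut]
  grind

theorem reach_relabel_shortcut_singleton :
    ((shortcut a b).relabel h).reach [h a] = {1, 2} := by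
  ext q'
  change (∃ q ∈ ({0} : Set (Fin 3)), ((shortcut a b).relabel h).E q (h a) q') ↔ _
  simp [relabel_shortcut_E hab]

theorem reach_relabel_shortcut_pair :
    ((shortcut a b).relabel h).reach [h a, h a] = {1} := by
  ext q'
  rw [← List.singleton_append, reach_append_singleton, reach_relabel_shortcut_singleton hab]
  simp [step, relabel_shortcut_E hab]

theorem not_flankable_relabel_shortcut : ¬ ((shortcut a b).relabel h).Flankable := by
  intro hflank
  have hmem : [h a, h a] ∈ ((shortcut a b).relabel h).lang :=
    ⟨1, by simp [reach_relabel_shortcut_pair hab]⟩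
  have hblocked : [h a, h a] ++ [h a] ∉ ((shortcut a b).relabel h).lang := by
    rw [append_singleton_mem_lang, reach_relabel_shortcut_pair hab]
    simp [relabel_shortcut_E hab]
  have hsub : ((shortcut a b).relabel h).reach [h a, h a] ⊆
      ((shortcut a b).relabel h).reach [h a] := by
    simp [reach_relabel_shortcut_singleton hab, reach_relabel_shortcut_pair hab]
  exact hflank.append_singleton_notMem_lang hsub hmem hblocked hmem

end RelabelShortcut

end NFA'

theorem stmt16_general {A B : Type} (h : A → B) (hh : ¬ Function.Injective h) :
    ∃ (Q : Type) (_ : Fintype Q) (M : NFA' Q A), M.Flankable ∧ ¬ (M.relabel h).Flankable := by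
  obtain ⟨a, b, hab, hne⟩ := Function.not_injective_iff.1 hh
  exact ⟨Fin 3, inferInstance, NFA'.shortcut a b,
    ⟨_, (NFA'.isDeterministic_shortcut hne).flanks⟩, NFA'.not_flankable_relabel_shortcut hab⟩

/-- flankability is not preserved by (non-injective) relabeling:
there are alphabets `A`, `B`, a map `h : A → B` and a flankable NFA `M` over `A`
whose relabeling along `h` is not flankable. -/
theorem stmt16 :
    ∃ (A B : Type) (_ : Fintype A) (_ : Fintype B) (h : A → B)
      (Q : Type) (_ : Fintype Q) (M : NFA' Q A),
      (∃ F : Q → A → Prop, M.Flanks F) ∧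
      ¬ ∃ F' : Q → B → Prop,
          (NFA'.mk (fun q b q' => ∃ a, h a = b ∧ M.E q a q') M.I).Flanks F' := by
  have hconst : ¬ Function.Injective fun _ : Bool => () := fun hinj => Bool.false_ne_true (hinj rfl)
  exact ⟨Bool, Unit, inferInstance, inferInstance, fun _ => (), stmt16_general _ hconst⟩
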